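/- If a bidirected graph G_τ contains no b-circuit, then its transitive closure Ft(G_τ) contains no b-circuit. -/

import Mathlib

/-- A signed vertex `x^α` : a vertex together with a sign in `ℤˣ`. -/
abbrev SV (V : Type) := V × ℤˣ

/-- A dart : an ordered signed edge `(x^α, y^β)`, traversed from `x` (entered with
half-edge sign `α`) to `y` (left with half-edge sign `β`). -/
abbrev BDart (V : Type) := SV V × SV V

/-- A bidirected graph on the vertex set `V`, given as its set of (unordered) signed
edges `{x^α, y^β}`; the half-edge of such an edge at `x` has sign `α` and the
half-edge at `y` has sign `β`. -/
abbrev BGraph (V : Type) := Set (Sym2 (SV V))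

/-- `IsWalk G x l y` : the list of darts `l` forms a chain from `x` to `y` in `G`. -/
def IsWalk {V : Type} (G : BGraph V) : V → List (BDart V) → V → Prop
  | x, [], y => x = y
  | x, d :: l, y => d.1.1 = x ∧ Sym2.mk d.1 d.2 ∈ G ∧ IsWalk G d.2.1 l y

/-- `IsBWalk G x α l y β` : `l` is a b-walk from `x^α` to `y^β` : a nonempty chain
from `x` to `y` whose first half-edge sign at `x` is `α`, whose last half-edge sign
at `y` is `β`, and such that at every internal vertex occurrence the two incident
half-edge signs sum to `0`. -/
def IsBWalk {V : Type} (G : BGraph V) (x : V) (α : ℤˣ) (l : List (BDart V)) (y : V)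
    (β : ℤˣ) : Prop :=
  l ≠ [] ∧ IsWalk G x l y ∧ (∀ d ∈ l.head?, d.1.2 = α) ∧ (∀ d ∈ l.getLast?, d.2.2 = β) ∧
    List.Chain' (fun d d' => ((d.2.2 : ℤ) + (d'.1.2 : ℤ) = 0)) l

/-- `IsBPath G x α l y β` : `l` is a b-path from `x^α` to `y^β` : a b-walk from `x^α`
to `y^β` that is minimal, i.e. no proper subsequence of its darts, taken in the same
order, is a b-walk from `x^α` to `y^β`. -/
def IsBPath {V : Type} (G : BGraph V) (x : V) (α : ℤˣ) (l : List (BDart V)) (y : V)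
    (β : ℤˣ) : Prop :=
  IsBWalk G x α l y β ∧ ∀ l', l'.Sublist l → l' ≠ l → ¬ IsBWalk G x α l' y β

/-- The transitive closure `Ft G` : its edges are the edges `{x^α, y^β}` for which
`G` contains a b-path from `x^α` to `y^β`. -/
def Ft {V : Type} (G : BGraph V) : BGraph V :=
  {e | ∃ x α y β l, IsBPath G x α l y β ∧ e = Sym2.mk (x, α) (y, β)}

/-- The transitive closure `ft G H` of the partial graph `H` within `G` : the edges
of `H` together with every edge `{x^α, y^β}` of `G` for which `H` contains a b-path
from `x^α` to `y^β`. -/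
def ft {V : Type} (G H : BGraph V) : BGraph V :=
  H ∪ {e | e ∈ G ∧ ∃ x α y β l, IsBPath H x α l y β ∧ e = Sym2.mk (x, α) (y, β)}

/-- `IsTR G H` : `H` is a transitive reduction of `G` : a partial graph of `G`
minimal with the property `ft G H = G`. -/
def IsTR {V : Type} (G H : BGraph V) : Prop :=
  H ⊆ G ∧ ft G H = G ∧ ∀ H', H' ⊂ H → ft G H' ≠ G

/-- A bidirected graph has no b-circuit if it contains no b-path from `x^α` to
`x^{-α}` for any vertex `x` and sign `α`. -/
def NoBCircuit {V : Type} (G : BGraph V) : Prop :=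
  ¬ ∃ (x : V) (α : ℤˣ) (l : List (BDart V)), IsBPath G x α l x (-α)

/-! A b-walk arriving at `y` along an edge `{x^α, y^β}` must leave `y` with sign `-β`. Orient the
edge as an arc from `x^α` to `y^{-β}`: b-walks from `x^α` to `y^β` become directed walks from `x^α`
to `y^{-β}` on the signed vertices, so b-circuits become closed directed walks, and `Ft` becomes the
ordinary transitive closure of the arc relation. Taking the transitive closure twice changes
nothing. -/

section DoubleCover

open Relation

variable {V : Type} {G : BGraph V} {x y : V} {α β : ℤˣ} {d : BDart V} {l : List (BDart V)}

/-- The opposite `x^{-α}` of the signed vertex `x^α`: the sign with which a b-walk that arrives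
at `x` with sign `α` has to leave it. -/
def SV.opp (p : SV V) : SV V := (p.1, -p.2)

@[simp]
theorem SV.opp_opp (p : SV V) : p.opp.opp = p := by simp [SV.opp]

/-- The arc relation of the directed double cover of `G`: every edge `{x^α, y^β}` gives the arcs
`x^α → y^{-β}` and `y^β → x^{-α}`, so that composable arcs are edges consecutive on a b-walk. -/
def BGraph.CoverAdj (G : BGraph V) (p q : SV V) : Prop := s(p, q.opp) ∈ G

theorem units_coe_add_eq_zero_iff (ε δ : ℤˣ) : (ε : ℤ) + (δ : ℤ) = 0 ↔ δ = -ε := by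
  rw [Units.ext_iff, Units.val_neg, eq_neg_iff_add_eq_zero, add_comm]

theorem isBWalk_iff_isChain :
    IsBWalk G x α l y β ↔ l ≠ [] ∧ IsWalk G x l y ∧ (∀ d ∈ l.head?, d.1.2 = α) ∧
      (∀ d ∈ l.getLast?, d.2.2 = β) ∧ l.IsChain fun d d' => d'.1.2 = -d.2.2 := by
  simp only [IsBWalk, units_coe_add_eq_zero_iff]
  rfl

theorem isBWalk_singleton :
    IsBWalk G x α [d] y β ↔ d = ((x, α), (y, β)) ∧ s(d.1, d.2) ∈ G := by
  obtain ⟨⟨a, s⟩, ⟨b, t⟩⟩ := d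
  simp only [isBWalk_iff_isChain, IsWalk, List.isChain_singleton, List.head?_cons,
    List.getLast?_singleton, Option.mem_def, Option.some.injEq, forall_eq', Prod.mk.injEq]
  tauto

theorem isBWalk_cons (hl : l ≠ []) :
    IsBWalk G x α (d :: l) y β ↔
      d.1 = (x, α) ∧ s(d.1, d.2) ∈ G ∧ IsBWalk G d.2.1 (-d.2.2) l y β := by
  obtain ⟨⟨a, s⟩, ⟨b, t⟩⟩ := d
  obtain ⟨e, l, rfl⟩ := List.exists_cons_of_ne_nil hl
  simp only [isBWalk_iff_isChain, IsWalk, List.isChain_cons_cons, List.head?_cons,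
    List.getLast?_cons_cons, Option.mem_def, Option.some.injEq, forall_eq', Prod.mk.injEq]
  tauto

theorem IsBWalk.transGen_coverAdj (h : IsBWalk G x α l y β) :
    TransGen G.CoverAdj (x, α) (SV.opp (y, β)) := by
  induction l generalizing x α with
  | nil => exact absurd rfl h.1
  | cons d l ih =>
    by_cases hl : l = []
    · subst hl
      obtain ⟨rfl, he⟩ := isBWalk_singleton.mp h
      exact .single (by simpa [BGraph.CoverAdj] using he)
    · obtain ⟨hd, he, htail⟩ := (isBWalk_cons hl).mp h
      have harc : G.CoverAdj (x, α) (SV.opp d.2) := by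
        simpa [BGraph.CoverAdj, hd] using he
      exact .head harc (ih htail)

theorem exists_isBWalk_of_transGen_coverAdj {p q : SV V} (h : TransGen G.CoverAdj p q.opp) :
    ∃ l, IsBWalk G p.1 p.2 l q.1 q.2 := by
  induction h using TransGen.head_induction_on with
  | @single p hpq =>
    have he : s(p, q) ∈ G := by simpa [BGraph.CoverAdj] using hpq
    exact ⟨[(p, q)], isBWalk_singleton.mpr ⟨rfl, he⟩⟩
  | @head p r hpr _ ih =>
    obtain ⟨l, hl⟩ := ih
    exact ⟨(p, r.opp) :: l, (isBWalk_cons hl.1).mpr ⟨rfl, hpr, by simpa [SV.opp] using hl⟩⟩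

theorem IsBWalk.exists_isBPath (h : IsBWalk G x α l y β) : ∃ l', IsBPath G x α l' y β := by
  obtain ⟨m, hm, hmin⟩ :=
    (measure List.length).wf.has_min {l | IsBWalk G x α l y β} ⟨l, h⟩
  exact ⟨m, hm, fun l' hsub hne hl' =>
    hmin l' hl' (hsub.length_le.lt_of_ne fun hlen => hne (hsub.eq_of_length hlen))⟩

theorem exists_isBPath_iff_transGen_coverAdj :
    (∃ l, IsBPath G x α l y β) ↔ TransGen G.CoverAdj (x, α) (SV.opp (y, β)) := by
  constructor
  · rintro ⟨l, hl⟩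
    exact hl.1.transGen_coverAdj
  · intro h
    obtain ⟨l, hl⟩ := exists_isBWalk_of_transGen_coverAdj h
    exact hl.exists_isBPath

theorem BGraph.CoverAdj.opp {p q : SV V} (h : G.CoverAdj p q) : G.CoverAdj q.opp p.opp := by
  simpa [BGraph.CoverAdj, Sym2.eq_swap] using h

theorem transGen_coverAdj_opp {p q : SV V} (h : TransGen G.CoverAdj p q) :
    TransGen G.CoverAdj q.opp p.opp :=
  transGen_swap.mp (h.lift SV.opp fun _ _ => BGraph.CoverAdj.opp)

theorem coverAdj_Ft (G : BGraph V) : (Ft G).CoverAdj = TransGen G.CoverAdj := by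
  ext p q
  constructor
  · rintro ⟨x, α, y, β, l, hl, he⟩
    have hwalk := hl.1.transGen_coverAdj
    rcases Sym2.eq_iff.mp he with ⟨rfl, hq⟩ | ⟨rfl, hq⟩
    · simpa [← hq] using hwalk
    · simpa [← hq] using transGen_coverAdj_opp hwalk
  · intro h
    rw [← q.opp_opp] at h
    obtain ⟨l, hl⟩ := exists_isBPath_iff_transGen_coverAdj.mpr h
    exact ⟨_, _, _, _, l, hl, rfl⟩

theorem noBCircuit_iff_transGen_coverAdj :
    NoBCircuit G ↔ ∀ p, ¬ TransGen G.CoverAdj p p := by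
  simp only [NoBCircuit, exists_isBPath_iff_transGen_coverAdj, SV.opp, neg_neg, not_exists,
    Prod.forall]

theorem stmt17_general (G : BGraph V) : NoBCircuit (Ft G) ↔ NoBCircuit G := by
  rw [noBCircuit_iff_transGen_coverAdj, noBCircuit_iff_transGen_coverAdj, coverAdj_Ft,
    transGen_eq_self]

end DoubleCover

/-- If a bidirected graph `G` contains no b-circuit, then its
transitive closure `Ft G` contains no b-circuit. -/
theorem stmt17 {V : Type} [Fintype V] (G : BGraph V) (h : NoBCircuit G) :
    NoBCircuit (Ft G) :=
  (stmt17_general G).mpr h
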